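/- For all disjoint coalitions C, D ⊆ AG and all formulas φ, ψ ∈ Φ, the formula (⟨C⟩φ ∧ ⟨D⟩ψ) → ⟨C∪D⟩(φ∧ψ) holds at every state of every independent general concurrent game model. -/

import Mathlib

/-! The outcomes of a joint action shrink when the action is extended to a larger coalition. The
merge of joint actions of disjoint coalitions `C` and `D` extends both of them, so if the two
actions force `φ` and `ψ` respectively, the merge forces `φ ∧ ψ`. Independence is exactly what
makes the merge available. -/

namespace CL

/-- The language Φ of coalition logic over a set of agents, with atomic
propositions drawn from ℕ (a countable set). -/
inductive Formula (Agent : Type) : Type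
  | top : Formula Agent
  | atom : ℕ → Formula Agent
  | neg : Formula Agent → Formula Agent
  | and : Formula Agent → Formula Agent → Formula Agent
  | coal : Set Agent → Formula Agent → Formula Agent

namespace Formula

variable {Agent : Type}

def bot : Formula Agent := neg top

def or (φ ψ : Formula Agent) : Formula Agent := neg (and (neg φ) (neg ψ))

def imp (φ ψ : Formula Agent) : Formula Agent := or (neg φ) ψ

def iff (φ ψ : Formula Agent) : Formula Agent := and (imp φ ψ) (imp ψ φ)

end Formula

/-- The three frame properties: seriality, independence of agents, determinism.
`ES` is represented by `Set P3`, the eight subsets of {S, I, D}. -/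
inductive P3 : Type
  | S | I | D
deriving DecidableEq
section
open Classical

/-- Merge of two joint actions of disjoint coalitions. -/
noncomputable def jaUnion {Agent Act : Type} {C D : Set Agent}
    (σC : C → Act) (σD : D → Act) : ↥(C ∪ D) → Act :=
  fun a =>
    if h : a.1 ∈ C then σC ⟨a.1, h⟩
    else σD ⟨a.1, ((Set.mem_union _ _ _).mp a.2).resolve_left h⟩

end

/-- A general concurrent game frame: a nonempty set of states, a nonempty set
of actions, and an outcome function for the grand coalition.  Joint actions of
a coalition C are functions C → Act; action profiles are functions Agent → Act. -/
structure Frame (Agent : Type) where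
  State : Type
  state_nonempty : Nonempty State
  Act : Type
  act_nonempty : Nonempty Act
  out : State → (Agent → Act) → Set State

namespace Frame

variable {Agent : Type} (F : Frame Agent)

/-- Outcome function for a coalition C. -/
def outC (C : Set Agent) (s : F.State) (σ : C → F.Act) : Set F.State :=
  ⋃ (τ : Agent → F.Act) (_ : ∀ a : C, τ a.1 = σ a), F.out s τ

/-- Availability function: the available joint actions of C at s. -/
def aja (C : Set Agent) (s : F.State) : Set (C → F.Act) :=
  {σ | (F.outC C s σ).Nonempty}

def Serial : Prop := ∀ (s : F.State) (C : Set Agent), (F.aja C s).Nonempty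

def Independent : Prop :=
  ∀ (s : F.State) (C D : Set Agent), C ∩ D = ∅ →
    ∀ σC ∈ F.aja C s, ∀ σD ∈ F.aja D s, jaUnion σC σD ∈ F.aja (C ∪ D) s

def Deterministic : Prop :=
  ∀ s : F.State, ∀ σ ∈ F.aja Set.univ s, ∃ t : F.State, F.outC Set.univ s σ = {t}

end Frame

/-- A general concurrent game model: a frame together with a labeling function
(atomic propositions are drawn from the countable set ℕ). -/
structure Model (Agent : Type) extends Frame Agent where
  lab : State → Set ℕ

namespace Model

variable {Agent : Type} (M : Model Agent)

/-- Satisfaction: M, s ⊨ φ. -/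
def sat : Formula Agent → M.State → Prop
  | .top, _ => True
  | .atom n, s => n ∈ M.lab s
  | .neg φ, s => ¬ sat φ s
  | .and φ ψ, s => sat φ s ∧ sat ψ s
  | .coal C φ, s => ∃ σ ∈ M.toFrame.aja C s, ∀ t ∈ M.toFrame.outC C s σ, sat φ t

/-- M is an X-model (for X ∈ ES). -/
def IsX (X : Set P3) : Prop :=
  (P3.S ∈ X → M.toFrame.Serial) ∧ (P3.I ∈ X → M.toFrame.Independent) ∧
    (P3.D ∈ X → M.toFrame.Deterministic)

end Model

/-- φ is X-valid: φ holds at every pointed X-model. -/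
def XValid {Agent : Type} (X : Set P3) (φ : Formula Agent) : Prop :=
  ∀ M : Model Agent, M.IsX X → ∀ s : M.State, M.sat φ s

/-- φ is X-satisfiable: φ holds at some pointed X-model. -/
def XSat {Agent : Type} (X : Set P3) (φ : Formula Agent) : Prop :=
  ∃ M : Model Agent, M.IsX X ∧ ∃ s : M.State, M.sat φ s

/-- φ ⊨_XL ψ : ψ holds at every pointed X-model at which φ holds. -/
def XConseq {Agent : Type} (X : Set P3) (φ ψ : Formula Agent) : Prop :=
  ∀ M : Model Agent, M.IsX X → ∀ s : M.State, M.sat φ s → M.sat ψ s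

section jaUnion

variable {Agent Act : Type} {C D : Set Agent} (σC : C → Act) (σD : D → Act)

theorem jaUnion_of_mem (a : ↥(C ∪ D)) (ha : a.1 ∈ C) : jaUnion σC σD a = σC ⟨a, ha⟩ :=
  dif_pos ha

theorem jaUnion_of_notMem (a : ↥(C ∪ D)) (ha : a.1 ∉ C) :
    jaUnion σC σD a = σD ⟨a, a.2.resolve_left ha⟩ :=
  dif_neg ha

end jaUnion

namespace Frame

variable {Agent : Type} (F : Frame Agent) {C D : Set Agent}

theorem mem_outC {s : F.State} {σ : C → F.Act} {t : F.State} :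
    t ∈ F.outC C s σ ↔ ∃ τ : Agent → F.Act, (∀ a : C, τ a = σ a) ∧ t ∈ F.out s τ := by
  simp only [outC, Set.mem_iUnion, exists_prop]

variable (s : F.State)

theorem outC_subset_outC {σC : C → F.Act} {σD : D → F.Act} (hCD : C ⊆ D)
    (hσ : ∀ a : C, σD (Set.inclusion hCD a) = σC a) : F.outC D s σD ⊆ F.outC C s σC := by
  intro t ht
  obtain ⟨τ, hτ, ht⟩ := F.mem_outC.mp ht
  exact F.mem_outC.mpr ⟨τ, fun a => (hτ (Set.inclusion hCD a)).trans (hσ a), ht⟩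

theorem outC_jaUnion_subset_left (σC : C → F.Act) (σD : D → F.Act) :
    F.outC (C ∪ D) s (jaUnion σC σD) ⊆ F.outC C s σC :=
  F.outC_subset_outC s Set.subset_union_left fun a => jaUnion_of_mem σC σD _ a.2

theorem outC_jaUnion_subset_right (hCD : C ∩ D = ∅) (σC : C → F.Act) (σD : D → F.Act) :
    F.outC (C ∪ D) s (jaUnion σC σD) ⊆ F.outC D s σD :=
  F.outC_subset_outC s Set.subset_union_right fun a =>
    jaUnion_of_notMem σC σD _ ((Set.disjoint_iff_inter_eq_empty.mpr hCD).notMem_of_mem_right a.2)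

end Frame

theorem Model.sat_imp {Agent : Type} (M : Model Agent) (φ ψ : Formula Agent) (s : M.State) :
    M.sat (φ.imp ψ) s ↔ (M.sat φ s → M.sat ψ s) := by
  simp only [Formula.imp, Formula.or, sat, not_and, not_not]

theorem ia_valid_on_independent_general {Agent : Type} (M : Model Agent)
    (hM : M.toFrame.Independent) (C D : Set Agent) (hCD : C ∩ D = ∅)
    (φ ψ : Formula Agent) (s : M.State) :
    M.sat (((Formula.coal C φ).and (Formula.coal D ψ)).imp
      (Formula.coal (C ∪ D) (φ.and ψ))) s := by
  rw [Model.sat_imp]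
  rintro ⟨⟨σC, hσC, hφ⟩, ⟨σD, hσD, hψ⟩⟩
  refine ⟨jaUnion σC σD, hM s C D hCD σC hσC σD hσD, fun t ht => ⟨hφ t ?_, hψ t ?_⟩⟩
  · exact M.outC_jaUnion_subset_left s σC σD ht
  · exact M.outC_jaUnion_subset_right s hCD σC σD ht

/-- A-IA is valid on independent models: for disjoint coalitions C, D, the
formula (⟨C⟩φ ∧ ⟨D⟩ψ) → ⟨C∪D⟩(φ∧ψ) holds at every state of every independent
general concurrent game model. -/
theorem ia_valid_on_independent {Agent : Type} [Fintype Agent] (M : Model Agent)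
    (hM : M.toFrame.Independent) (C D : Set Agent) (hCD : C ∩ D = ∅)
    (φ ψ : Formula Agent) (s : M.State) :
    M.sat (((Formula.coal C φ).and (Formula.coal D ψ)).imp
      (Formula.coal (C ∪ D) (φ.and ψ))) s :=
  ia_valid_on_independent_general M hM C D hCD φ ψ s

end CL
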